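/- Let k ≥ 1 be an integer and let a < a' < b' < b. There exists a constant C > 0 such that every harmonic function φ on S_{a,b} (i.e. φ is C² there with Δ_{x,y}φ = 0) satisfying ‖φ‖_{H^k(S_{a,b})} < ∞ also satisfies ‖φ‖_{H^{k+1}(S_{a',b'})} ≤ C ‖φ‖_{H^k(S_{a,b})}. -/

import Mathlib

open MeasureTheory

/-- Horizontal partial derivative `∂_{x_j}` (functions on `ℝ^d × ℝ`). -/
noncomputable def dX {d : ℕ} (j : Fin d) (f : EuclideanSpace ℝ (Fin d) × ℝ → ℝ)
    (p : EuclideanSpace ℝ (Fin d) × ℝ) : ℝ :=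
  fderiv ℝ f p (EuclideanSpace.single j 1, 0)

/-- Vertical partial derivative `∂_y` (functions on `ℝ^d × ℝ`). -/
noncomputable def dY {d : ℕ} (f : EuclideanSpace ℝ (Fin d) × ℝ → ℝ)
    (p : EuclideanSpace ℝ (Fin d) × ℝ) : ℝ :=
  fderiv ℝ f p (0, 1)

/-- The `i`-th coordinate direction in `ℝ^d × ℝ`. -/
noncomputable def dir (d : ℕ) (i : Fin (d + 1)) : EuclideanSpace ℝ (Fin d) × ℝ :=
  Fin.lastCases ((0 : EuclideanSpace ℝ (Fin d)), (1 : ℝ))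
    (fun j => (EuclideanSpace.single j (1 : ℝ), (0 : ℝ))) i

/-- Squared Sobolev norm `‖φ‖²_{H^k(U)} = Σ_{|α| ≤ k} ∫_U |∂^α φ|²` (summed over ordered
words of coordinate directions of length at most `k`). -/
noncomputable def sobSq {d : ℕ} (k : ℕ) (φ : EuclideanSpace ℝ (Fin d) × ℝ → ℝ)
    (U : Set (EuclideanSpace ℝ (Fin d) × ℝ)) : ENNReal :=
  ∑ m ∈ Finset.range (k + 1), ∑ v : Fin m → Fin (d + 1),
    ∫⁻ p in U, ENNReal.ofReal ((iteratedFDeriv ℝ m φ p (fun i => dir d (v i))) ^ 2)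

/-!
A harmonic function has the mean value property against every radial weight `w` supported in a
ball of radius `r`: for `f` harmonic, `t ↦ ∫ w(q) f(p - t q) dq` is constant on `[0, 1]`, because
`w(q) q` is the gradient of a compactly supported potential and an integration by parts turns the
derivative in `t` into an integral of `Δ f`. Choosing for `w` a smooth mollifier `ρ` of mass one
gives `f = ρ ⋆ f` at every point whose ball of radius `r` lies in the domain. Hence `f` is smooth,
the gradient can be moved onto `ρ`, and Young's inequality bounds `∇f` in `L^p` of the smaller
domain by `‖∇ρ‖_{L¹}` times the `L^p` norm of `f` on the larger one. Partial derivatives of `f`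
are again harmonic, so the same bound holds at every order. Finally, `η` is uniformly continuous,
so a single radius `r` serves every point of the inner strip.
-/

section

open Metric Set Filter InnerProductSpace ContinuousLinearMap WithLp
open scoped Topology ContDiff Laplacian Convolution ENNReal

/-! ### The mean value property -/

theorem hasCompactSupport_of_eq_zero_of_lt_norm {X : Type*} [SeminormedAddGroup X] [ProperSpace X]
    {Y : Type*} [Zero Y] {f : X → Y} {r : ℝ} (h : ∀ x, r < ‖x‖ → f x = 0) :
    HasCompactSupport f :=
  HasCompactSupport.intro (isCompact_closedBall 0 r) fun x hx => h x (by simpa using hx)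

theorem integral_sum_fderiv_smul_eq_neg_of_hasCompactSupport {E F : Type*} [NormedAddCommGroup E]
    [NormedSpace ℝ E] [FiniteDimensional ℝ E] [MeasurableSpace E] [BorelSpace E]
    [NormedAddCommGroup F] [NormedSpace ℝ F] (μ : Measure E) [μ.IsAddHaarMeasure] {W : E → ℝ}
    (hW : ContDiff ℝ 1 W) (hWs : HasCompactSupport W) {X : E → E →L[ℝ] F} (hX : ContDiff ℝ 1 X)
    {ι : Type*} [Fintype ι] (e : ι → E) :
    ∫ x, ∑ i, fderiv ℝ W x (e i) • X x (e i) ∂μ =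
      -∫ x, W x • ∑ i, fderiv ℝ X x (e i) (e i) ∂μ := by
  have hXd := hX.differentiable one_ne_zero
  have hW' (v : E) : Continuous fun x => fderiv ℝ W x v :=
    (hW.continuous_fderiv one_ne_zero).clm_apply continuous_const
  have hX' (v : E) : Continuous fun x => fderiv ℝ X x v v :=
    ((hX.continuous_fderiv one_ne_zero).clm_apply continuous_const).clm_apply continuous_const
  have hXv (v : E) : Continuous fun x => X x v := hX.continuous.clm_apply continuous_const
  have hfderiv (x v : E) : fderiv ℝ (fun x => X x v) x v = fderiv ℝ X x v v := by
    rw [fderiv_clm_apply (hXd x) (differentiableAt_const v)]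
    simp
  have hleft (v : E) : Integrable (fun x => fderiv ℝ W x v • X x v) μ :=
    ((hW' v).smul (hXv v)).integrable_of_hasCompactSupport (hWs.fderiv_apply ℝ v).smul_right
  have hright (v : E) : Integrable (fun x => W x • fderiv ℝ X x v v) μ :=
    (hW.continuous.smul (hX' v)).integrable_of_hasCompactSupport hWs.smul_right
  have hparts (v : E) : ∫ x, fderiv ℝ W x v • X x v ∂μ = -∫ x, W x • fderiv ℝ X x v v ∂μ := by
    rw [← neg_eq_iff_eq_neg, ← integral_smul_fderiv_eq_neg_fderiv_smul_of_integrable (hleft v)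
      (by simpa only [hfderiv] using hright v)
      ((hW.continuous.smul (hXv v)).integrable_of_hasCompactSupport hWs.smul_right)
      (fun x _ => hW.differentiable one_ne_zero x)
      (fun x _ => (hXd x).clm_apply (differentiableAt_const v))]
    simp only [hfderiv]
  rw [integral_finsetSum _ fun i _ => hleft (e i)]
  simp only [hparts, Finset.sum_neg_distrib, Finset.smul_sum]
  rw [integral_finsetSum _ fun i _ => hright (e i)]

section RadialPotential

/-- The potential of the radial vector field `x ↦ w (‖x‖ ^ 2) • x`, normalised to vanish on the
sphere `‖x‖ ^ 2 = R`. -/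
noncomputable def radialPotential {E : Type*} [Norm E] (w : ℝ → ℝ) (R : ℝ) (x : E) : ℝ :=
  (∫ s in R..‖x‖ ^ 2, w s) / 2

theorem radialPotential_eq_zero {E : Type*} [Norm E] {w : ℝ → ℝ} {R : ℝ}
    (hw : ∀ s, R < s → w s = 0) {x : E} (hx : R ≤ ‖x‖ ^ 2) : radialPotential w R x = 0 := by
  have : ∫ s in R..‖x‖ ^ 2, w s = 0 :=
    intervalIntegral.integral_zero_ae <| .of_forall fun s hs => hw s (uIoc_of_le hx ▸ hs).1
  rw [radialPotential, this, zero_div]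

variable {E : Type*} [NormedAddCommGroup E] [InnerProductSpace ℝ E]

theorem hasFDerivAt_radialPotential {w : ℝ → ℝ} (hw : Continuous w) (R : ℝ) (x : E) :
    HasFDerivAt (radialPotential w R) (w (‖x‖ ^ 2) • innerSL ℝ x) x := by
  have hint : HasDerivAt (fun u => ∫ s in R..u, w s) (w (‖x‖ ^ 2)) (‖x‖ ^ 2) :=
    intervalIntegral.integral_hasDerivAt_right (hw.intervalIntegrable _ _)
      (hw.stronglyMeasurableAtFilter _ _) hw.continuousAt
  have hsq : HasFDerivAt (fun y : E => ‖y‖ ^ 2) (2 • innerSL ℝ x) x :=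
    (hasStrictFDerivAt_norm_sq x).hasFDerivAt
  refine ((hint.comp_hasFDerivAt x hsq).mul_const (2⁻¹ : ℝ)).congr_fderiv ?_
  ext y
  simp only [smul_apply, coe_innerSL_apply, nsmul_eq_mul, Nat.cast_ofNat, smul_eq_mul]
  ring

theorem contDiff_one_radialPotential {w : ℝ → ℝ} (hw : Continuous w) (R : ℝ) :
    ContDiff ℝ 1 (radialPotential w R : E → ℝ) := by
  rw [contDiff_one_iff_fderiv]
  refine ⟨fun x => (hasFDerivAt_radialPotential hw R x).differentiableAt, ?_⟩
  rw [funext fun x : E => (hasFDerivAt_radialPotential hw R x).fderiv]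
  fun_prop

variable [FiniteDimensional ℝ E] [MeasurableSpace E] [BorelSpace E]
variable {F : Type*} [NormedAddCommGroup F] [NormedSpace ℝ F]

theorem integral_radial_smul_apply_self (μ : Measure E) [μ.IsAddHaarMeasure] {w : ℝ → ℝ} {r : ℝ}
    (hw : Continuous w) (hr : 0 ≤ r) (hw₀ : ∀ s, r ^ 2 < s → w s = 0) {X : E → E →L[ℝ] F}
    (hX : ContDiff ℝ 1 X) {ι : Type*} [Fintype ι] (e : OrthonormalBasis ι ℝ E) :
    ∫ x, w (‖x‖ ^ 2) • X x x ∂μ =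
      -∫ x, radialPotential w (r ^ 2) x • ∑ i, fderiv ℝ X x (e i) (e i) ∂μ := by
  have hsupp : HasCompactSupport (radialPotential w (r ^ 2) : E → ℝ) :=
    hasCompactSupport_of_eq_zero_of_lt_norm (r := r) fun x hx =>
      radialPotential_eq_zero hw₀ (by gcongr)
  rw [← integral_sum_fderiv_smul_eq_neg_of_hasCompactSupport μ
    (contDiff_one_radialPotential hw _) hsupp hX]
  congr 1 with x
  conv_lhs => enter [2, 2]; rw [← e.sum_repr' x]
  simp [(hasFDerivAt_radialPotential hw _ x).fderiv, mul_smul, Finset.smul_sum,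
    real_inner_comm x]

end RadialPotential

theorem hasDerivAt_integral_smul_dilation {E F : Type*} [NormedAddCommGroup E]
    [NormedSpace ℝ E] [FiniteDimensional ℝ E] [MeasurableSpace E] [BorelSpace E]
    [NormedAddCommGroup F] [NormedSpace ℝ F] {μ : Measure E} [IsFiniteMeasureOnCompacts μ]
    {ρ : E → ℝ} (hρ : Continuous ρ) (hρs : HasCompactSupport ρ) {g : E → F} (hg : ContDiff ℝ 1 g)
    (hgs : HasCompactSupport g) (p : E) (t : ℝ) :
    HasDerivAt (fun t : ℝ => ∫ q, ρ q • g (p - t • q) ∂μ)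
      (-∫ q, ρ q • fderiv ℝ g (p - t • q) q ∂μ) t := by
  have hg' := hg.continuous_fderiv one_ne_zero
  have hgc := hg.continuous
  obtain ⟨C, hC⟩ := hg'.bounded_above_of_compact_support (hgs.fderiv ℝ)
  have hderiv (q : E) (s : ℝ) : HasDerivAt (fun s : ℝ => ρ q • g (p - s • q))
      (-(ρ q • fderiv ℝ g (p - s • q) q)) s := by
    have hline : HasDerivAt (fun s : ℝ => p - s • q) (-q) s := by
      simpa using ((hasDerivAt_id s).smul_const q).const_sub p
    simpa [Function.comp_def] using
      ((hg.differentiable one_ne_zero _).hasFDerivAt.comp_hasDerivAt s hline).fun_const_smul (ρ q)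
  rw [← integral_neg]
  refine (hasDerivAt_integral_of_dominated_loc_of_deriv_le (bound := fun q => |ρ q| * (C * ‖q‖))
    univ_mem (.of_forall fun s => ?_) ?_ ?_ (.of_forall fun q s _ => ?_) ?_
    (.of_forall fun q s _ => hderiv q s)).2
  · exact Continuous.aestronglyMeasurable (by fun_prop)
  · exact Continuous.integrable_of_hasCompactSupport (by fun_prop) hρs.smul_right
  · exact Continuous.aestronglyMeasurable (by fun_prop)
  · rw [norm_neg, norm_smul, Real.norm_eq_abs]
    gcongr
    exact (fderiv ℝ g _).le_of_opNorm_le (hC _) q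
  · exact Continuous.integrable_of_hasCompactSupport (by fun_prop)
      (hρs.comp_left (g := abs) abs_zero).mul_right

section MeanValue

variable {E : Type*} [NormedAddCommGroup E] [InnerProductSpace ℝ E] [FiniteDimensional ℝ E]
variable {F : Type*} [NormedAddCommGroup F] [NormedSpace ℝ F]

theorem laplacian_eq_sum_fderiv_fderiv (f : E → F) (x : E) {ι : Type*} [Fintype ι]
    (e : OrthonormalBasis ι ℝ E) :
    Δ f x = ∑ i, fderiv ℝ (fderiv ℝ f) x (e i) (e i) := by
  simp [laplacian_eq_iteratedFDeriv_orthonormalBasis f e, iteratedFDeriv_two_apply]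

theorem integral_radial_smul_fderiv_eq_zero [MeasurableSpace E] [BorelSpace E] (μ : Measure E)
    [μ.IsAddHaarMeasure] {w : ℝ → ℝ} {r : ℝ} (hw : Continuous w) (hr : 0 ≤ r)
    (hw₀ : ∀ s, r ^ 2 < s → w s = 0) {g : E → F} (hg : ContDiff ℝ 2 g) {p : E}
    (hΔ : ∀ x ∈ closedBall p r, Δ g x = 0) {t : ℝ} (ht : t ∈ Icc (0 : ℝ) 1) :
    ∫ q, w (‖q‖ ^ 2) • fderiv ℝ g (p - t • q) q ∂μ = 0 := by
  have hg' : ContDiff ℝ 1 (fderiv ℝ g) := hg.fderiv_right (by norm_num)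
  have hX : ContDiff ℝ 1 fun q => fderiv ℝ g (p - t • q) := hg'.comp (by fun_prop)
  rw [integral_radial_smul_apply_self μ hw hr hw₀ hX (stdOrthonormalBasis ℝ E), neg_eq_zero]
  refine integral_eq_zero_of_ae (.of_forall fun q => smul_eq_zero.2 ?_)
  have hline : HasFDerivAt (fun q : E => p - t • q) (-(t • .id ℝ E)) q :=
    ((hasFDerivAt_id q).const_smul t).const_sub p
  have hfderiv : fderiv ℝ (fun q => fderiv ℝ g (p - t • q)) q =
      (fderiv ℝ (fderiv ℝ g) (p - t • q)).comp (-(t • .id ℝ E)) :=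
    ((hg'.differentiable one_ne_zero _).hasFDerivAt.comp q hline).fderiv
  refine (le_total r ‖q‖).imp (fun hq => radialPotential_eq_zero hw₀ (by gcongr)) fun hq => ?_
  have hmem : p - t • q ∈ closedBall p r := by
    rw [mem_closedBall, dist_self_sub_left, norm_smul, Real.norm_of_nonneg ht.1]
    exact (mul_le_of_le_one_left (norm_nonneg q) ht.2).trans hq
  simpa [hfderiv, ← Finset.smul_sum, ← laplacian_eq_sum_fderiv_fderiv]
    using Or.inr (hΔ _ hmem)

theorem integral_radial_smul_sub_eq [MeasurableSpace E] [BorelSpace E] (μ : Measure E)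
    [μ.IsAddHaarMeasure] {w : ℝ → ℝ} {r : ℝ} (hw : Continuous w) (hr : 0 ≤ r)
    (hw₀ : ∀ s, r ^ 2 < s → w s = 0) {g : E → F} (hg : ContDiff ℝ 2 g)
    (hgs : HasCompactSupport g) {p : E}
    (hΔ : ∀ x ∈ closedBall p r, Δ g x = 0) :
    ∫ q, w (‖q‖ ^ 2) • g (p - q) ∂μ = ∫ q, w (‖q‖ ^ 2) • g p ∂μ := by
  have hρ : HasCompactSupport fun q : E => w (‖q‖ ^ 2) :=
    hasCompactSupport_of_eq_zero_of_lt_norm (r := r) fun x hx => hw₀ _ (by gcongr)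
  have hderiv (t : ℝ) := hasDerivAt_integral_smul_dilation (μ := μ)
    (by fun_prop : Continuous fun q : E => w (‖q‖ ^ 2)) hρ (hg.of_le one_le_two) hgs p t
  have := constant_of_has_deriv_right_zero
    (fun t _ => (hderiv t).continuousAt.continuousWithinAt) (fun t ht => by
      simpa [integral_radial_smul_fderiv_eq_zero μ hw hr hw₀ hg hΔ (Ico_subset_Icc_self ht)]
        using (hderiv t).hasDerivWithinAt)
    1 (right_mem_Icc.2 zero_le_one)
  simpa using this

end MeanValue

theorem exists_contDiff_hasCompactSupport_eventuallyEq {E F : Type*} [NormedAddCommGroup E]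
    [NormedSpace ℝ E] [FiniteDimensional ℝ E] [NormedAddCommGroup F] [NormedSpace ℝ F]
    {n : ℕ∞} {f : E → F} {K U : Set E} (hK : IsCompact K) (hU : IsOpen U) (hKU : K ⊆ U)
    (hf : ContDiffOn ℝ n f U) :
    ∃ g : E → F, ContDiff ℝ n g ∧ HasCompactSupport g ∧ g =ᶠ[𝓝ˢ K] f := by
  obtain ⟨L, hL, hKL, hLU⟩ := exists_compact_between hK hU hKU
  obtain ⟨χ, hχK, hχL, -⟩ :=
    exists_contMDiffMap_one_nhds_of_subset_interior (n := n) (modelWithCornersSelf ℝ E)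
      hK.isClosed hKL
  refine ⟨fun x => χ x • f x, contDiff_iff_contDiffAt.2 fun x => ?_,
    .intro hL fun x hx => by simp [hχL x hx], hχK.mono fun x hx => by simp [hx]⟩
  by_cases hx : x ∈ U
  · exact χ.contMDiff.contDiff.contDiffAt.smul (hf.contDiffAt (hU.mem_nhds hx))
  · have hzero : (fun x => χ x • f x) =ᶠ[𝓝 x] fun _ => 0 := by
      filter_upwards [hL.isClosed.isOpen_compl.mem_nhds fun h => hx (hLU h)] with y hy
      simp [hχL y hy]
    exact contDiffAt_const.congr_of_eventuallyEq hzero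

/-! ### Radial mollifiers -/

section Mollifier

/-- The smooth radial bump `x ↦ σ (1 - ‖x‖² / r²)`, with `σ` the function `Real.smoothTransition`,
which for `r > 0` is positive exactly on the open ball of radius `r`. -/
noncomputable def radialBump {E : Type*} [Norm E] (r : ℝ) (x : E) : ℝ :=
  Real.smoothTransition (1 - ‖x‖ ^ 2 / r ^ 2)

theorem smoothTransition_one_sub_div_eq_zero {r s : ℝ} (hr : 0 < r) (hs : r ^ 2 < s) :
    Real.smoothTransition (1 - s / r ^ 2) = 0 :=
  Real.smoothTransition.zero_of_nonpos <| sub_nonpos.2 <| (one_le_div (by positivity)).2 hs.le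

variable {E : Type*} [NormedAddCommGroup E]

theorem radialBump_eq_zero {r : ℝ} (hr : 0 < r) {x : E} (hx : r < ‖x‖) : radialBump r x = 0 :=
  smoothTransition_one_sub_div_eq_zero hr (by gcongr)

theorem hasCompactSupport_radialBump [ProperSpace E] {r : ℝ} (hr : 0 < r) :
    HasCompactSupport (radialBump r : E → ℝ) :=
  hasCompactSupport_of_eq_zero_of_lt_norm fun _ => radialBump_eq_zero hr

variable [InnerProductSpace ℝ E]

theorem contDiff_radialBump (r : ℝ) : ContDiff ℝ ∞ (radialBump r : E → ℝ) :=
  Real.smoothTransition.contDiff.comp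
    (contDiff_const.sub ((contDiff_norm_sq ℝ).div_const (r ^ 2)))

variable [MeasurableSpace E]

/-- The smooth radial mollifier of radius `r`: the bump `radialBump r` normalised to have integral
one against `μ`. -/
noncomputable def radialMollifier (μ : Measure E) (r : ℝ) (x : E) : ℝ :=
  (∫ y, radialBump r y ∂μ)⁻¹ * radialBump r x

theorem contDiff_radialMollifier (μ : Measure E) (r : ℝ) : ContDiff ℝ ∞ (radialMollifier μ r) :=
  contDiff_const.mul (contDiff_radialBump r)

theorem fderiv_radialMollifier_eq_zero (μ : Measure E) {r : ℝ} (hr : 0 < r) {q : E} (hq : r < ‖q‖) :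
    fderiv ℝ (radialMollifier μ r) q = 0 := by
  have hzero : radialMollifier μ r =ᶠ[𝓝 q] fun _ => 0 := by
    filter_upwards [continuous_norm.continuousAt.eventually (lt_mem_nhds hq)] with x hx
    rw [radialMollifier, radialBump_eq_zero hr hx, mul_zero]
  exact hzero.fderiv_eq.trans (fderiv_const_apply _)

variable [FiniteDimensional ℝ E]

theorem hasCompactSupport_radialMollifier (μ : Measure E) {r : ℝ} (hr : 0 < r) :
    HasCompactSupport (radialMollifier μ r) :=
  (hasCompactSupport_radialBump hr).mul_left

variable [BorelSpace E]

theorem lintegral_enorm_fderiv_radialMollifier_lt_top (μ : Measure E)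
    [IsFiniteMeasureOnCompacts μ] {r : ℝ} (hr : 0 < r) :
    ∫⁻ q, ‖fderiv ℝ (radialMollifier μ r) q‖ₑ ∂μ < ⊤ :=
  ((contDiff_radialMollifier μ r).continuous_fderiv (by simp)
    |>.integrable_of_hasCompactSupport
      ((hasCompactSupport_radialMollifier μ hr).fderiv ℝ)).hasFiniteIntegral

theorem integral_radialMollifier (μ : Measure E) [μ.IsAddHaarMeasure] {r : ℝ} (hr : 0 < r) :
    ∫ x, radialMollifier μ r x ∂μ = 1 := by
  have hpos : 0 < ∫ x, radialBump r x ∂μ :=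
    (contDiff_radialBump r).continuous.integral_pos_of_hasCompactSupport_nonneg_nonzero (x := 0)
      (hasCompactSupport_radialBump hr) (fun _ => Real.smoothTransition.nonneg _)
      (by simp [radialBump])
  simp only [radialMollifier, integral_const_mul, inv_mul_cancel₀ hpos.ne']

variable {F : Type*} [NormedAddCommGroup F] [NormedSpace ℝ F] [CompleteSpace F]

theorem convolution_radial_eq_of_harmonicOnNhd (μ : Measure E) [μ.IsAddHaarMeasure]
    {w : ℝ → ℝ} {r : ℝ} (hw : Continuous w) (hr : 0 ≤ r) (hw₀ : ∀ s, r ^ 2 < s → w s = 0)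
    {f : E → F} {p : E} (hf : HarmonicOnNhd f (closedBall p r)) :
    ((fun q : E => w (‖q‖ ^ 2)) ⋆[lsmul ℝ ℝ, μ] f) p = (∫ q : E, w (‖q‖ ^ 2) ∂μ) • f p := by
  obtain ⟨g, hg, hgs, hgf⟩ := exists_contDiff_hasCompactSupport_eventuallyEq (n := 2)
    (isCompact_closedBall p r) (isOpen_setOfPred_harmonicAt f) hf
    fun x hx => hx.1.contDiffWithinAt
  have hgf_nhds (x : E) (hx : x ∈ closedBall p r) : g =ᶠ[𝓝 x] f :=
    hgf.filter_mono (nhds_le_nhdsSet hx)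
  have hΔ (x : E) (hx : x ∈ closedBall p r) : Δ g x = 0 :=
    ((laplacian_congr_nhds (hgf_nhds x hx)).trans (hf x hx).2).self_of_nhds
  have hcongr (q : E) : w (‖q‖ ^ 2) • f (p - q) = w (‖q‖ ^ 2) • g (p - q) := by
    rcases lt_or_ge r ‖q‖ with hq | hq
    · rw [hw₀ _ (by gcongr), zero_smul, zero_smul]
    · rw [(hgf_nhds (p - q) (by simpa using hq)).self_of_nhds]
  simp only [convolution_def, lsmul_apply, hcongr]
  rw [integral_radial_smul_sub_eq μ hw hr hw₀ hg hgs hΔ, integral_smul_const,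
    (hgf_nhds p (mem_closedBall_self hr)).self_of_nhds]

theorem radialMollifier_convolution_eq_of_harmonicOnNhd (μ : Measure E) [μ.IsAddHaarMeasure]
    {r : ℝ} (hr : 0 < r) {f : E → F} {p : E} (hf : HarmonicOnNhd f (closedBall p r)) :
    (radialMollifier μ r ⋆[lsmul ℝ ℝ, μ] f) p = f p := by
  have hw : Continuous fun s : ℝ =>
      (∫ y : E, radialBump r y ∂μ)⁻¹ * Real.smoothTransition (1 - s / r ^ 2) := by
    have := Real.smoothTransition.continuous
    fun_prop
  calc (radialMollifier μ r ⋆[lsmul ℝ ℝ, μ] f) p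
    _ = (∫ x, radialMollifier μ r x ∂μ) • f p :=
        convolution_radial_eq_of_harmonicOnNhd μ hw hr.le
          (fun s hs => by rw [smoothTransition_one_sub_div_eq_zero hr hs, mul_zero]) hf
    _ = f p := by rw [integral_radialMollifier μ hr, one_smul]

theorem exists_continuous_eventuallyEq_radialMollifier_convolution (μ : Measure E)
    [μ.IsAddHaarMeasure] {r : ℝ} (hr : 0 < r) {f : E → F} {p : E}
    (hf : HarmonicOnNhd f (closedBall p r)) :
    ∃ g : E → F, Continuous g ∧ EqOn g f (closedBall p r) ∧
      f =ᶠ[𝓝 p] radialMollifier μ r ⋆[lsmul ℝ ℝ, μ] g := by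
  obtain ⟨g, hg, -, hgf⟩ := exists_contDiff_hasCompactSupport_eventuallyEq (n := 0)
    (isCompact_closedBall p r) (isOpen_setOfPred_harmonicAt f) hf
    fun x hx => (hx.1.of_le (by simp)).contDiffWithinAt
  have hgf_nhds (x : E) (hx : x ∈ closedBall p r) : g =ᶠ[𝓝 x] f :=
    hgf.filter_mono (nhds_le_nhdsSet hx)
  have hharm : ∀ᶠ y in 𝓝 p, ∀ q ∈ closedBall (0 : E) r, HarmonicAt g (y - q) := by
    refine (isCompact_closedBall 0 r).eventually_forall_of_forall_eventually fun q hq => ?_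
    have hpq : p - q ∈ closedBall p r := by simpa using hq
    exact continuous_sub.continuousAt.eventually
      ((harmonicAt_congr_nhds (hgf_nhds _ hpq)).2 (hf _ hpq)).eventually
  refine ⟨g, hg.continuous, fun x hx => (hgf_nhds x hx).self_of_nhds, ?_⟩
  filter_upwards [hharm, hgf_nhds p (mem_closedBall_self hr.le)] with y hy hgfy
  rw [← hgfy, radialMollifier_convolution_eq_of_harmonicOnNhd μ hr fun x hx => ?_]
  simpa using hy (y - x) (by rwa [mem_closedBall_zero_iff, ← dist_eq_norm, dist_comm])

end Mollifier

/-! ### Young's inequality for convolution with an `L¹` weight -/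

theorem rpow_lintegral_mul_le {α : Type*} [MeasurableSpace α] {ν : Measure α} {w g : α → ℝ≥0∞}
    (hw : AEMeasurable w ν) (hg : AEMeasurable g ν) {p : ℝ} (hp : 1 ≤ p) :
    (∫⁻ x, w x * g x ∂ν) ^ p ≤ (∫⁻ x, w x ∂ν) ^ (p - 1) * ∫⁻ x, w x * g x ^ p ∂ν := by
  have hp₀ : 0 < p := by linarith
  have hp' : 0 ≤ 1 - p⁻¹ := sub_nonneg.2 (inv_le_one_of_one_le₀ hp)
  have hsplit (x : α) : w x * g x = w x ^ (1 - p⁻¹) * (w x * g x ^ p) ^ p⁻¹ := by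
    rw [ENNReal.mul_rpow_of_nonneg _ _ (by positivity), ← mul_assoc,
      ← ENNReal.rpow_add_of_nonneg _ _ hp' (by positivity), sub_add_cancel, ENNReal.rpow_one,
      ENNReal.rpow_rpow_inv hp₀.ne']
  calc (∫⁻ x, w x * g x ∂ν) ^ p
    _ ≤ ((∫⁻ x, w x ∂ν) ^ (1 - p⁻¹) * (∫⁻ x, w x * g x ^ p ∂ν) ^ p⁻¹) ^ p := by
        simp only [hsplit]
        gcongr
        exact ENNReal.lintegral_mul_norm_pow_le hw (by fun_prop) hp' (by positivity)
          (sub_add_cancel 1 p⁻¹)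
    _ = (∫⁻ x, w x ∂ν) ^ (p - 1) * ∫⁻ x, w x * g x ^ p ∂ν := by
        rw [ENNReal.mul_rpow_of_nonneg _ _ hp₀.le, ← ENNReal.rpow_mul,
          ENNReal.rpow_inv_rpow hp₀.ne', sub_mul, one_mul, inv_mul_cancel₀ hp₀.ne']

theorem lintegral_rpow_lintegral_mul_sub_le {G : Type*} [AddGroup G] [MeasurableSpace G]
    [MeasurableAdd₂ G] [MeasurableNeg G] {ν : Measure G} [SFinite ν] [ν.IsAddRightInvariant]
    {w g : G → ℝ≥0∞} (hw : Measurable w) (hg : Measurable g) {p : ℝ} (hp : 1 ≤ p) :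
    ∫⁻ x, (∫⁻ y, w y * g (x - y) ∂ν) ^ p ∂ν ≤ (∫⁻ y, w y ∂ν) ^ p * ∫⁻ y, g y ^ p ∂ν := by
  have hmeas : Measurable fun z : G × G => w z.2 * g (z.1 - z.2) ^ p := by fun_prop
  calc ∫⁻ x, (∫⁻ y, w y * g (x - y) ∂ν) ^ p ∂ν
    _ ≤ ∫⁻ x, (∫⁻ y, w y ∂ν) ^ (p - 1) * ∫⁻ y, w y * g (x - y) ^ p ∂ν ∂ν :=
        lintegral_mono fun x => rpow_lintegral_mul_le hw.aemeasurable (by fun_prop) hp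
    _ = (∫⁻ y, w y ∂ν) ^ (p - 1) * ∫⁻ y, ∫⁻ x, w y * g (x - y) ^ p ∂ν ∂ν := by
        rw [lintegral_const_mul _ hmeas.lintegral_prod_right',
          lintegral_lintegral_swap hmeas.aemeasurable]
    _ = (∫⁻ y, w y ∂ν) ^ (p - 1) * ((∫⁻ y, w y ∂ν) * ∫⁻ y, g y ^ p ∂ν) := by
        rw [← lintegral_mul_const _ hw]
        congr! 3 with y
        rw [lintegral_const_mul _ (by fun_prop),
          lintegral_sub_right_eq_self (fun x => g x ^ p) y]
    _ = (∫⁻ y, w y ∂ν) ^ p * ∫⁻ y, g y ^ p ∂ν := by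
        rw [← mul_assoc]
        congr 1
        nth_rw 2 [← ENNReal.rpow_one (∫⁻ y, w y ∂ν)]
        rw [← ENNReal.rpow_add_of_nonneg _ _ (by linarith) zero_le_one, sub_add_cancel]

/-! ### Gradient estimate for harmonic functions -/

section Gradient

variable {E : Type*} [NormedAddCommGroup E] [InnerProductSpace ℝ E] [FiniteDimensional ℝ E]
variable {F : Type*} [NormedAddCommGroup F] [NormedSpace ℝ F] [CompleteSpace F]

theorem contDiffAt_of_harmonicAt {f : E → F} {p : E} (hf : HarmonicAt f p) :
    ContDiffAt ℝ ∞ f p := by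
  let _ : MeasurableSpace E := borel E
  have : BorelSpace E := ⟨rfl⟩
  obtain ⟨r, hr, hball⟩ := nhds_basis_closedBall.mem_iff.1 hf.eventually
  obtain ⟨g, hg, -, hfg⟩ :=
    exists_continuous_eventuallyEq_radialMollifier_convolution volume hr hball
  exact ((hasCompactSupport_radialMollifier volume hr).contDiff_convolution_left (n := ⊤) _
    (contDiff_radialMollifier volume r) hg.locallyIntegrable).contDiffAt.congr_of_eventuallyEq hfg

variable [MeasurableSpace E] [BorelSpace E] (μ : Measure E)

theorem enorm_fderiv_le_lintegral_of_harmonicOnNhd [μ.IsAddHaarMeasure] {r : ℝ} (hr : 0 < r)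
    {f : E → F} {p : E} (hf : HarmonicOnNhd f (closedBall p r)) :
    ‖fderiv ℝ f p‖ₑ ≤ ∫⁻ q, ‖fderiv ℝ (radialMollifier μ r) q‖ₑ * ‖f (p - q)‖ₑ ∂μ := by
  obtain ⟨g, hg, hgf, hfg⟩ := exists_continuous_eventuallyEq_radialMollifier_convolution μ hr hf
  rw [hfg.fderiv_eq, ((hasCompactSupport_radialMollifier μ hr).hasFDerivAt_convolution_left
    (lsmul ℝ ℝ) ((contDiff_radialMollifier μ r).of_le (by simp)) hg.locallyIntegrable p).fderiv,
    convolution_def]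
  refine (enorm_integral_le_lintegral_enorm _).trans (lintegral_mono fun q => ?_)
  have hsmulRight : (lsmul ℝ ℝ).precompL E (fderiv ℝ (radialMollifier μ r) q) (g (p - q)) =
      (fderiv ℝ (radialMollifier μ r) q).smulRight (g (p - q)) := by
    ext; simp
  rcases lt_or_ge r ‖q‖ with hq | hq
  · simp [fderiv_radialMollifier_eq_zero μ hr hq, enorm]
  · rw [hsmulRight, hgf (by simpa using hq : p - q ∈ closedBall p r)]
    simp [enorm, nnnorm_smulRight_apply]

theorem setLIntegral_enorm_fderiv_rpow_le_of_harmonicOnNhd [μ.IsAddHaarMeasure] {r : ℝ}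
    (hr : 0 < r) {p : ℝ} (hp : 1 ≤ p) {f : E → F} {S T : Set E} (hS : MeasurableSet S)
    (hf : HarmonicOnNhd f S) (hST : ∀ x ∈ T, closedBall x r ⊆ S) :
    ∫⁻ x in T, ‖fderiv ℝ f x‖ₑ ^ p ∂μ ≤
      (∫⁻ y, ‖fderiv ℝ (radialMollifier μ r) y‖ₑ ∂μ) ^ p * ∫⁻ x in S, ‖f x‖ₑ ^ p ∂μ := by
  classical
  set ρ := radialMollifier μ r
  have : Continuous (fderiv ℝ ρ) := (contDiff_radialMollifier μ r).continuous_fderiv (by simp)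
  set g : E → ℝ≥0∞ := S.indicator fun x => ‖f x‖ₑ
  have hg : Measurable g := by
    simp only [g, ← piecewise_eq_indicator]
    exact hf.continuousOn.enorm.measurable_piecewise continuousOn_const hS
  have hpoint (x : E) (hx : x ∈ T) : ‖fderiv ℝ f x‖ₑ ≤ ∫⁻ y, ‖fderiv ℝ ρ y‖ₑ * g (x - y) ∂μ := by
    refine (enorm_fderiv_le_lintegral_of_harmonicOnNhd μ hr (hf.mono (hST x hx))).trans
      (lintegral_mono fun y => ?_)
    rcases lt_or_ge r ‖y‖ with hy | hy
    · simp [fderiv_radialMollifier_eq_zero μ hr hy, enorm]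
    · rw [show g (x - y) = ‖f (x - y)‖ₑ from
        indicator_of_mem (hST x hx (by simpa using hy : x - y ∈ closedBall x r)) _]
  calc ∫⁻ x in T, ‖fderiv ℝ f x‖ₑ ^ p ∂μ
    _ ≤ ∫⁻ x in T, (∫⁻ y, ‖fderiv ℝ ρ y‖ₑ * g (x - y) ∂μ) ^ p ∂μ := by
        refine setLIntegral_mono ?_ fun x hx => by gcongr; exact hpoint x hx
        have : Measurable fun z : E × E => ‖fderiv ℝ ρ z.2‖ₑ * g (z.1 - z.2) := by fun_prop
        exact this.lintegral_prod_right'.pow_const p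
    _ ≤ ∫⁻ x, (∫⁻ y, ‖fderiv ℝ ρ y‖ₑ * g (x - y) ∂μ) ^ p ∂μ := setLIntegral_le_lintegral _ _
    _ ≤ (∫⁻ y, ‖fderiv ℝ ρ y‖ₑ ∂μ) ^ p * ∫⁻ x, g x ^ p ∂μ :=
        lintegral_rpow_lintegral_mul_sub_le (by fun_prop) hg hp
    _ = (∫⁻ y, ‖fderiv ℝ ρ y‖ₑ ∂μ) ^ p * ∫⁻ x in S, ‖f x‖ₑ ^ p ∂μ := by
        rw [← lintegral_indicator hS]
        congr 2 with x
        by_cases hx : x ∈ S <;> simp [g, hx, ENNReal.zero_rpow_of_pos (zero_lt_one.trans_le hp)]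

end Gradient

/-! ### Derivatives of harmonic functions -/

section IteratedFDeriv

variable {E F : Type*} [NormedAddCommGroup E] [NormedSpace ℝ E] [NormedAddCommGroup F]
  [NormedSpace ℝ F] {f : E → F} {x : E}

theorem fderiv_fderiv_apply (hf : ContDiffAt ℝ 2 f x) (v w : E) :
    fderiv ℝ (fun y => fderiv ℝ f y v) x w = fderiv ℝ (fderiv ℝ f) x w v := by
  have hf' : ContDiffAt ℝ 1 (fderiv ℝ f) x := hf.fderiv_right (by norm_num)
  rw [fderiv_clm_apply (hf'.differentiableAt one_ne_zero) (differentiableAt_const v)]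
  simp

theorem fderiv_fderiv_apply_comm (hf : ContDiffAt ℝ 2 f x) (v w : E) :
    fderiv ℝ (fun y => fderiv ℝ f y v) x w = fderiv ℝ (fun y => fderiv ℝ f y w) x v := by
  rw [fderiv_fderiv_apply hf, fderiv_fderiv_apply hf, (hf.isSymmSndFDerivAt (by simp)).eq]

theorem iteratedFDeriv_succ_apply_eventuallyEq {k : ℕ} (hf : ContDiffAt ℝ (k + 1) f x)
    (v : Fin (k + 1) → E) :
    (fun y => iteratedFDeriv ℝ (k + 1) f y v) =ᶠ[𝓝 x]
      fun y => fderiv ℝ (fun z => iteratedFDeriv ℝ k f z (Fin.tail v)) y (v 0) := by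
  filter_upwards [hf.eventually (mod_cast WithTop.coe_ne_top)] with y hy
  exact (hy.differentiableAt_iteratedFDeriv
    (mod_cast k.lt_succ_self)).iteratedFDeriv_succ_apply_left'

end IteratedFDeriv

section HarmonicDerivatives

variable {E : Type*} [NormedAddCommGroup E] [InnerProductSpace ℝ E] [FiniteDimensional ℝ E]
variable {F : Type*} [NormedAddCommGroup F] [NormedSpace ℝ F]

theorem laplacian_fderiv_apply {f : E → F} {x : E} (hf : ContDiffAt ℝ 3 f x) (v : E) :
    Δ (fun y => fderiv ℝ f y v) x = fderiv ℝ (Δ f) x v := by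
  set e := stdOrthonormalBasis ℝ E
  have hfv (w : E) : ContDiffAt ℝ 2 (fun y => fderiv ℝ f y w) x :=
    (hf.fderiv_right (by norm_num)).clm_apply contDiffAt_const
  have hΔ : Δ f =ᶠ[𝓝 x] fun y => ∑ i, fderiv ℝ (fun z => fderiv ℝ f z (e i)) y (e i) := by
    filter_upwards [hf.eventually (by simp)] with y hy
    simp only [laplacian_eq_sum_fderiv_fderiv f y e,
      fderiv_fderiv_apply (hy.of_le (by norm_num))]
  have hcomm (w : E) : (fun y => fderiv ℝ (fun z => fderiv ℝ f z v) y w) =ᶠ[𝓝 x]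
      fun y => fderiv ℝ (fun z => fderiv ℝ f z w) y v := by
    filter_upwards [hf.eventually (by simp)] with y hy
    exact fderiv_fderiv_apply_comm (hy.of_le (by norm_num)) v w
  have hsum (i) : DifferentiableAt ℝ (fun y => fderiv ℝ (fun z => fderiv ℝ f z (e i)) y (e i)) x :=
    (((hfv (e i)).fderiv_right (m := 1) (by norm_num)).differentiableAt one_ne_zero).clm_apply
      (differentiableAt_const _)
  rw [laplacian_eq_sum_fderiv_fderiv _ _ e, hΔ.fderiv_eq, fderiv_fun_sum fun i _ => hsum i,
    sum_apply]
  refine Finset.sum_congr rfl fun i _ => ?_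
  rw [← fderiv_fderiv_apply (hfv v), (hcomm (e i)).fderiv_eq, fderiv_fderiv_apply_comm (hfv (e i))]

variable [CompleteSpace F] {f : E → F} {x : E}

theorem harmonicAt_fderiv_apply (hf : HarmonicAt f x) (v : E) :
    HarmonicAt (fun y => fderiv ℝ f y v) x := by
  have hf₃ : ContDiffAt ℝ 3 f x := (contDiffAt_of_harmonicAt hf).of_le ENat.LEInfty.out
  refine ⟨(hf₃.fderiv_right (by norm_num)).clm_apply contDiffAt_const, ?_⟩
  filter_upwards [hf.eventually, hf.2.eventuallyEq_nhds] with y hy hΔ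
  rw [laplacian_fderiv_apply ((contDiffAt_of_harmonicAt hy).of_le ENat.LEInfty.out),
    hΔ.fderiv_eq]
  simp

theorem harmonicAt_iteratedFDeriv_apply (hf : HarmonicAt f x) {k : ℕ} (v : Fin k → E) :
    HarmonicAt (fun y => iteratedFDeriv ℝ k f y v) x := by
  induction k with
  | zero => simpa using hf
  | succ k ih =>
    rw [harmonicAt_congr_nhds (iteratedFDeriv_succ_apply_eventuallyEq
      ((contDiffAt_of_harmonicAt hf).of_le (mod_cast le_top)) v)]
    exact harmonicAt_fderiv_apply (ih _) _

theorem setLIntegral_enorm_iteratedFDeriv_succ_apply_rpow_le_of_harmonicOnNhd [MeasurableSpace E]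
    [BorelSpace E] (μ : Measure E) [μ.IsAddHaarMeasure] {r : ℝ}
    (hr : 0 < r) {p : ℝ} (hp : 1 ≤ p) {f : E → F} {S T : Set E} (hS : MeasurableSet S)
    (hf : HarmonicOnNhd f S) (hST : ∀ x ∈ T, closedBall x r ⊆ S) {k : ℕ} (v : Fin (k + 1) → E) :
    ∫⁻ x in T, ‖iteratedFDeriv ℝ (k + 1) f x v‖ₑ ^ p ∂μ ≤
      (‖v 0‖ₑ * ∫⁻ y, ‖fderiv ℝ (radialMollifier μ r) y‖ₑ ∂μ) ^ p *
        ∫⁻ x in S, ‖iteratedFDeriv ℝ k f x (Fin.tail v)‖ₑ ^ p ∂μ := by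
  have hp₀ : 0 ≤ p := zero_le_one.trans hp
  set g : E → F := fun x => iteratedFDeriv ℝ k f x (Fin.tail v)
  have hg : HarmonicOnNhd g S := fun x hx => harmonicAt_iteratedFDeriv_apply (hf x hx) _
  have hpoint (x : E) (hx : x ∈ T) :
      ‖iteratedFDeriv ℝ (k + 1) f x v‖ₑ ≤ ‖v 0‖ₑ * ‖fderiv ℝ g x‖ₑ := by
    have hfx := contDiffAt_of_harmonicAt (hf x (hST x hx (mem_closedBall_self hr.le)))
    calc ‖iteratedFDeriv ℝ (k + 1) f x v‖ₑ
      _ = ‖fderiv ℝ g x (v 0)‖ₑ := congrArg _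
          (iteratedFDeriv_succ_apply_eventuallyEq (contDiffAt_infty.1 hfx _) v).self_of_nhds
      _ ≤ ‖v 0‖ₑ * ‖fderiv ℝ g x‖ₑ := (le_opENorm _ _).trans_eq (mul_comm _ _)
  calc ∫⁻ x in T, ‖iteratedFDeriv ℝ (k + 1) f x v‖ₑ ^ p ∂μ
    _ ≤ ∫⁻ x in T, ‖v 0‖ₑ ^ p * ‖fderiv ℝ g x‖ₑ ^ p ∂μ := by
        refine setLIntegral_mono (((measurable_fderiv ℝ g).enorm.pow_const p).const_mul _)
          fun x hx => ?_
        rw [← ENNReal.mul_rpow_of_nonneg _ _ hp₀]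
        gcongr
        exact hpoint x hx
    _ = ‖v 0‖ₑ ^ p * ∫⁻ x in T, ‖fderiv ℝ g x‖ₑ ^ p ∂μ :=
        lintegral_const_mul' _ _ (ENNReal.rpow_ne_top_of_nonneg hp₀ enorm_ne_top)
    _ ≤ _ := by
        rw [ENNReal.mul_rpow_of_nonneg _ _ hp₀, mul_assoc]
        gcongr
        exact setLIntegral_enorm_fderiv_rpow_le_of_harmonicOnNhd μ hr hp hS hg hST
end HarmonicDerivatives

/-! ### Euclidean structure on a product

The product `X × Y` carries the sup norm, so harmonicity of `φ : X × Y → F` is expressed through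
`φ ∘ ofLp` on the inner product space `WithLp 2 (X × Y)`. -/

section Product

variable {X Y : Type*} [NormedAddCommGroup X] [NormedAddCommGroup Y]

theorem closedBall_subset_preimage_ofLp (x : WithLp 2 (X × Y)) (r : ℝ) :
    closedBall x r ⊆ ofLp ⁻¹' closedBall (ofLp x) r := fun y hy => by
  simpa using ((prod_lipschitzWith_ofLp 2 X Y).dist_le_mul y x).trans (by simpa using hy)

variable [NormedSpace ℝ X] [NormedSpace ℝ Y]
variable {F : Type*} [NormedAddCommGroup F] [NormedSpace ℝ F]

theorem fderiv_comp_ofLp_apply (φ : X × Y → F) (x : WithLp 2 (X × Y)) (v : X × Y) :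
    fderiv ℝ (φ ∘ ofLp) x (toLp 2 v) = fderiv ℝ φ (ofLp x) v :=
  DFunLike.congr_fun
    ((prodContinuousLinearEquiv 2 ℝ X Y).comp_right_fderiv (f := φ) (x := x)) (toLp 2 v)

theorem iteratedFDeriv_comp_ofLp_apply (φ : X × Y → F) {k : ℕ} (x : WithLp 2 (X × Y))
    (v : Fin k → X × Y) :
    iteratedFDeriv ℝ k (φ ∘ ofLp) x (fun i => toLp 2 (v i)) = iteratedFDeriv ℝ k φ (ofLp x) v := by
  have h := (prodContinuousLinearEquiv 2 ℝ X Y).iteratedFDerivWithin_comp_right φ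
    uniqueDiffOn_univ (mem_univ (ofLp x)) k
  rw [preimage_univ, iteratedFDerivWithin_univ, iteratedFDerivWithin_univ] at h
  exact DFunLike.congr_fun h fun i => toLp 2 (v i)

end Product

section ProductIntegral

variable {X Y F : Type*} [NormedAddCommGroup X] [InnerProductSpace ℝ X] [FiniteDimensional ℝ X]
  [MeasurableSpace X] [BorelSpace X]
  [NormedAddCommGroup Y] [InnerProductSpace ℝ Y] [FiniteDimensional ℝ Y]
  [MeasurableSpace Y] [BorelSpace Y]
  [NormedAddCommGroup F] [NormedSpace ℝ F]

theorem setLIntegral_enorm_iteratedFDeriv_comp_ofLp_apply (φ : X × Y → F) {k : ℕ}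
    (v : Fin k → X × Y) (p : ℝ) (S : Set (X × Y)) :
    ∫⁻ x in ofLp ⁻¹' S, ‖iteratedFDeriv ℝ k (φ ∘ ofLp) x fun i => toLp 2 (v i)‖ₑ ^ p =
      ∫⁻ x in S, ‖iteratedFDeriv ℝ k φ x v‖ₑ ^ p := by
  simp only [iteratedFDeriv_comp_ofLp_apply]
  exact (volume_preserving_ofLp X Y).setLIntegral_comp_preimage_emb
    (MeasurableEquiv.toLp 2 (X × Y)).symm.measurableEmbedding
    (fun x => ‖iteratedFDeriv ℝ k φ x v‖ₑ ^ p) S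

theorem setLIntegral_enorm_iteratedFDeriv_succ_apply_rpow_le_of_harmonicOnNhd_comp_ofLp
    [CompleteSpace F] {r : ℝ} (hr : 0 < r) {p : ℝ} (hp : 1 ≤ p) {φ : X × Y → F} {S T : Set (X × Y)}
    (hS : MeasurableSet S) (hφ : HarmonicOnNhd (φ ∘ ofLp (p := 2)) (ofLp ⁻¹' S))
    (hST : ∀ x ∈ T, closedBall x r ⊆ S) {k : ℕ} (v : Fin (k + 1) → X × Y) :
    ∫⁻ x in T, ‖iteratedFDeriv ℝ (k + 1) φ x v‖ₑ ^ p ≤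
      (‖toLp 2 (v 0)‖ₑ *
          ∫⁻ y : WithLp 2 (X × Y), ‖fderiv ℝ (radialMollifier volume r) y‖ₑ) ^ p *
        ∫⁻ x in S, ‖iteratedFDeriv ℝ k φ x (Fin.tail v)‖ₑ ^ p := by
  simp only [← setLIntegral_enorm_iteratedFDeriv_comp_ofLp_apply]
  exact setLIntegral_enorm_iteratedFDeriv_succ_apply_rpow_le_of_harmonicOnNhd volume hr hp
    (hS.preimage (volume_preserving_ofLp X Y).measurable) hφ
    (fun x hx => (closedBall_subset_preimage_ofLp x r).trans (preimage_mono (hST _ hx))) _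

end ProductIntegral

/-! ### Sobolev norms of harmonic functions -/

section Sobolev

theorem laplacian_comp_ofLp {d : ℕ} {φ : EuclideanSpace ℝ (Fin d) × ℝ → ℝ}
    {x : WithLp 2 (EuclideanSpace ℝ (Fin d) × ℝ)} (hφ : ContDiffAt ℝ 2 φ (ofLp x)) :
    Δ (φ ∘ ofLp (p := 2)) x = (∑ j, dX j (dX j φ) (ofLp x)) + dY (dY φ) (ofLp x) := by
  have hφ' : ContDiffAt ℝ 2 (φ ∘ ofLp) x := hφ.comp x contDiff_ofLp.contDiffAt
  have hsecond (v : EuclideanSpace ℝ (Fin d) × ℝ) :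
      fderiv ℝ (fderiv ℝ (φ ∘ ofLp)) x (toLp 2 v) (toLp 2 v) =
        fderiv ℝ (fun p => fderiv ℝ φ p v) (ofLp x) v := by
    simp only [← fderiv_fderiv_apply hφ', fderiv_comp_ofLp_apply]
    exact fderiv_comp_ofLp_apply (fun p => fderiv ℝ φ p v) x v
  set e := (EuclideanSpace.basisFun (Fin d) ℝ).prod (OrthonormalBasis.singleton Unit ℝ)
  simp only [laplacian_eq_sum_fderiv_fderiv _ _ e, Fintype.sum_sum_type, e,
    OrthonormalBasis.prod_apply, Sum.elim_inl, Sum.elim_inr, Function.comp_apply, hsecond,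
    EuclideanSpace.basisFun_apply, OrthonormalBasis.singleton_apply, LinearMap.inl_apply,
    LinearMap.inr_apply, Finset.univ_unique, Finset.sum_singleton]
  rfl

variable {d : ℕ} {φ : EuclideanSpace ℝ (Fin d) × ℝ → ℝ} {S T : Set (EuclideanSpace ℝ (Fin d) × ℝ)}

theorem harmonicOnNhd_comp_ofLp (hS : IsOpen S) (hφ : ContDiffOn ℝ 2 φ S)
    (hΔ : ∀ p ∈ S, (∑ j, dX j (dX j φ) p) + dY (dY φ) p = 0) :
    HarmonicOnNhd (φ ∘ ofLp (p := 2)) (ofLp ⁻¹' S) := by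
  intro x hx
  have hφx {y : WithLp 2 (EuclideanSpace ℝ (Fin d) × ℝ)} (hy : ofLp y ∈ S) :
      ContDiffAt ℝ 2 φ (ofLp y) := hφ.contDiffAt (hS.mem_nhds hy)
  refine ⟨(hφx hx).comp x contDiff_ofLp.contDiffAt, ?_⟩
  filter_upwards [(hS.preimage (prod_continuous_ofLp 2 _ _)).mem_nhds hx] with y hy
  rw [laplacian_comp_ofLp (hφx hy), hΔ _ hy, Pi.zero_apply]

theorem enorm_toLp_dir (i : Fin (d + 1)) : ‖toLp 2 (dir d i)‖ₑ = 1 := by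
  rw [← ofReal_norm, ENNReal.ofReal_eq_one]
  cases i using Fin.lastCases <;> simp [dir]

theorem sobSq_eq_sum_enorm (k : ℕ) (φ : EuclideanSpace ℝ (Fin d) × ℝ → ℝ)
    (U : Set (EuclideanSpace ℝ (Fin d) × ℝ)) :
    sobSq k φ U = ∑ m ∈ Finset.range (k + 1), ∑ v : Fin m → Fin (d + 1),
      ∫⁻ p in U, ‖iteratedFDeriv ℝ m φ p fun i => dir d (v i)‖ₑ ^ (2 : ℝ) := by
  have hsq (x : ℝ) : ENNReal.ofReal (x ^ 2) = ‖x‖ₑ ^ (2 : ℝ) := by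
    rw [Real.enorm_eq_ofReal_abs, ENNReal.rpow_two, ← ENNReal.ofReal_pow (abs_nonneg x), sq_abs]
  simp only [sobSq, hsq]

theorem sobSq_mono {U V : Set (EuclideanSpace ℝ (Fin d) × ℝ)} (k : ℕ) (h : U ⊆ V) :
    sobSq k φ U ≤ sobSq k φ V := by
  unfold sobSq
  gcongr

theorem sum_fin_succ_tail {ι M : Type*} [Fintype ι] [AddCommMonoid M] {k : ℕ}
    (g : (Fin k → ι) → M) :
    ∑ v : Fin (k + 1) → ι, g (Fin.tail v) = Fintype.card ι • ∑ w, g w := by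
  rw [← (Fin.consEquiv fun _ => ι).sum_comp, Fintype.sum_prod_type]
  simp [Fin.consEquiv]

theorem sobSq_succ_le {r : ℝ} (hr : 0 < r) (hS : IsOpen S) (hφ : ContDiffOn ℝ 2 φ S)
    (hΔ : ∀ p ∈ S, (∑ j, dX j (dX j φ) p) + dY (dY φ) p = 0)
    (hST : ∀ p ∈ T, closedBall p r ⊆ S) (k : ℕ) :
    sobSq (k + 1) φ T ≤ (1 + (d + 1) * (∫⁻ y : WithLp 2 (EuclideanSpace ℝ (Fin d) × ℝ),
      ‖fderiv ℝ (radialMollifier volume r) y‖ₑ) ^ 2) * sobSq k φ S := by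
  set K := ∫⁻ y : WithLp 2 (EuclideanSpace ℝ (Fin d) × ℝ),
    ‖fderiv ℝ (radialMollifier volume r) y‖ₑ
  have hTS : T ⊆ S := fun p hp => hST p hp (mem_closedBall_self hr.le)
  have hword (v : Fin (k + 1) → Fin (d + 1)) :
      ∫⁻ p in T, ‖iteratedFDeriv ℝ (k + 1) φ p fun i => dir d (v i)‖ₑ ^ (2 : ℝ) ≤
        K ^ 2 * ∫⁻ p in S, ‖iteratedFDeriv ℝ k φ p fun i => dir d (Fin.tail v i)‖ₑ ^ (2 : ℝ) := by
    simpa only [enorm_toLp_dir, one_mul, ENNReal.rpow_two, Fin.tail, Fin.tail_def] using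
      setLIntegral_enorm_iteratedFDeriv_succ_apply_rpow_le_of_harmonicOnNhd_comp_ofLp hr one_le_two
        hS.measurableSet (harmonicOnNhd_comp_ofLp hS hφ hΔ) hST fun i => dir d (v i)
  calc sobSq (k + 1) φ T
    _ = sobSq k φ T + ∑ v : Fin (k + 1) → Fin (d + 1),
        ∫⁻ p in T, ‖iteratedFDeriv ℝ (k + 1) φ p fun i => dir d (v i)‖ₑ ^ (2 : ℝ) := by
        simp only [sobSq_eq_sum_enorm, Finset.sum_range_succ _ (k + 1)]
    _ ≤ sobSq k φ S + ∑ v : Fin (k + 1) → Fin (d + 1),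
        K ^ 2 * ∫⁻ p in S, ‖iteratedFDeriv ℝ k φ p fun i => dir d (Fin.tail v i)‖ₑ ^ (2 : ℝ) := by
        gcongr with v
        · exact sobSq_mono k hTS
        · exact hword v
    _ = sobSq k φ S + (d + 1) * (K ^ 2 * ∑ w : Fin k → Fin (d + 1),
        ∫⁻ p in S, ‖iteratedFDeriv ℝ k φ p fun i => dir d (w i)‖ₑ ^ (2 : ℝ)) := by
        rw [sum_fin_succ_tail fun w => K ^ 2 *
          ∫⁻ p in S, ‖iteratedFDeriv ℝ k φ p fun i => dir d (w i)‖ₑ ^ (2 : ℝ), Finset.mul_sum]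
        simp
    _ ≤ sobSq k φ S + (d + 1) * (K ^ 2 * sobSq k φ S) := by
        gcongr
        rw [sobSq_eq_sum_enorm, Finset.sum_range_succ]
        exact le_add_self
    _ = (1 + (d + 1) * K ^ 2) * sobSq k φ S := by ring

theorem exists_pos_le_ofReal_sq {c : ℝ≥0∞} (hc : c ≠ ⊤) : ∃ C > 0, c ≤ ENNReal.ofReal (C ^ 2) := by
  refine ⟨1 + c.toReal, by positivity, (ENNReal.le_ofReal_iff_toReal_le hc (by positivity)).2 ?_⟩
  nlinarith [ENNReal.toReal_nonneg (a := c)]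

theorem exists_sobSq_succ_le (d : ℕ) {r : ℝ} (hr : 0 < r) :
    ∃ C > 0, ∀ (k : ℕ) (φ : EuclideanSpace ℝ (Fin d) × ℝ → ℝ)
      (S T : Set (EuclideanSpace ℝ (Fin d) × ℝ)), IsOpen S → (∀ p ∈ T, closedBall p r ⊆ S) →
      ContDiffOn ℝ 2 φ S → (∀ p ∈ S, (∑ j, dX j (dX j φ) p) + dY (dY φ) p = 0) →
      sobSq (k + 1) φ T ≤ ENNReal.ofReal (C ^ 2) * sobSq k φ S := by
  have hK := lintegral_enorm_fderiv_radialMollifier_lt_top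
    (volume : Measure (WithLp 2 (EuclideanSpace ℝ (Fin d) × ℝ))) hr
  obtain ⟨C, hC, hle⟩ := exists_pos_le_ofReal_sq (c := 1 + (d + 1) *
    (∫⁻ y : WithLp 2 (EuclideanSpace ℝ (Fin d) × ℝ),
      ‖fderiv ℝ (radialMollifier volume r) y‖ₑ) ^ 2) (by finiteness)
  exact ⟨C, hC, fun k φ S T hS hST hφ hΔ => (sobSq_succ_le hr hS hφ hΔ hST k).trans (by gcongr)⟩

end Sobolev

/-! ### Strips along a graph -/

section Strip

variable {α : Type*}

/-- The strip `S_{a,b}` of points `(x, y)` whose height `y - η x` above the graph of `η` lies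
strictly between `a` and `b`. -/
def graphStrip (η : α → ℝ) (a b : ℝ) : Set (α × ℝ) := {p | a < p.2 - η p.1 ∧ p.2 - η p.1 < b}

theorem isOpen_graphStrip [TopologicalSpace α] {η : α → ℝ} (hη : Continuous η) (a b : ℝ) :
    IsOpen (graphStrip η a b) :=
  isOpen_Ioo.preimage (continuous_snd.sub (hη.comp continuous_fst))

theorem exists_closedBall_subset_graphStrip [PseudoMetricSpace α] {η : α → ℝ}
    (hη : UniformContinuous η) {a b a' b' : ℝ} (ha : a < a') (hb : b' < b) :
    ∃ r > 0, ∀ p ∈ graphStrip η a' b', closedBall p r ⊆ graphStrip η a b := by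
  have hu : UniformContinuous fun p : α × ℝ => p.2 - η p.1 :=
    uniformContinuous_snd.sub (hη.comp uniformContinuous_fst)
  obtain ⟨r, hr, hdist⟩ := Metric.uniformContinuous_iff_le.1 hu (min (a' - a) (b - b'))
    (lt_min (sub_pos.2 ha) (sub_pos.2 hb))
  refine ⟨r, hr, fun p hp q hq => ?_⟩
  have h := abs_le.1 (hdist (mem_closedBall.1 hq))
  have h₁ := min_le_left (a' - a) (b - b')
  have h₂ := min_le_right (a' - a) (b - b')
  exact ⟨by linarith [hp.1], by linarith [hp.2]⟩

end Strip

theorem uniformContinuous_of_norm_fderiv_le {E F : Type*} [NormedAddCommGroup E] [NormedSpace ℝ E]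
    [NormedAddCommGroup F] [NormedSpace ℝ F] {f : E → F} (hf : Differentiable ℝ f) {C : ℝ}
    (hC : ∀ x, ‖fderiv ℝ f x‖ ≤ C) : UniformContinuous f :=
  (lipschitzWith_of_nnnorm_fderiv_le (C := C.toNNReal) hf fun x =>
    NNReal.le_toNNReal_of_coe_le (hC x)).uniformContinuous

theorem elliptic_regularity_strip_general {d : ℕ} {η : EuclideanSpace ℝ (Fin d) → ℝ}
    (hη : UniformContinuous η) {a b a' b' : ℝ} (ha : a < a') (hb : b' < b) :
    ∃ C > (0 : ℝ), ∀ (k : ℕ) (φ : EuclideanSpace ℝ (Fin d) × ℝ → ℝ),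
      ContDiffOn ℝ 2 φ (graphStrip η a b) →
      (∀ p ∈ graphStrip η a b, (∑ j, dX j (dX j φ) p) + dY (dY φ) p = 0) →
      sobSq (k + 1) φ (graphStrip η a' b') ≤
        ENNReal.ofReal (C ^ 2) * sobSq k φ (graphStrip η a b) := by
  obtain ⟨r, hr, hball⟩ := exists_closedBall_subset_graphStrip hη ha hb
  obtain ⟨C, hC, hle⟩ := exists_sobSq_succ_le d hr
  exact ⟨C, hC, fun k φ => hle k φ _ _ (isOpen_graphStrip hη.continuous a b) hball⟩

end

/-- Interior elliptic regularity in a strip: a harmonic function in `S_{a,b}` with finite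
`H^k` norm has finite `H^{k+1}` norm in any interior strip `S_{a',b'}`, with a uniform
constant. -/
theorem elliptic_regularity_strip
    (d : ℕ) (hd : 1 ≤ d)
    (η₁ : EuclideanSpace ℝ (Fin d) → ℝ)
    (hsm : ContDiff ℝ (⊤ : ℕ∞) η₁)
    (hbd : ∀ n : ℕ, ∃ C : ℝ, ∀ x, ‖iteratedFDeriv ℝ n η₁ x‖ ≤ C)
    (a b a' b' : ℝ) (h₁ : a < a') (h₂ : a' < b') (h₃ : b' < b)
    (k : ℕ) (hk : 1 ≤ k) :
    ∃ C > (0 : ℝ), ∀ φ : EuclideanSpace ℝ (Fin d) × ℝ → ℝ,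
      ContDiffOn ℝ 2 φ {p : EuclideanSpace ℝ (Fin d) × ℝ |
        a < p.2 - η₁ p.1 ∧ p.2 - η₁ p.1 < b} →
      (∀ p ∈ {p : EuclideanSpace ℝ (Fin d) × ℝ | a < p.2 - η₁ p.1 ∧ p.2 - η₁ p.1 < b},
        (∑ j, dX j (dX j φ) p) + dY (dY φ) p = 0) →
      sobSq k φ {p : EuclideanSpace ℝ (Fin d) × ℝ | a < p.2 - η₁ p.1 ∧ p.2 - η₁ p.1 < b} < ⊤ →
      sobSq (k + 1) φ {p : EuclideanSpace ℝ (Fin d) × ℝ |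
          a' < p.2 - η₁ p.1 ∧ p.2 - η₁ p.1 < b'}
        ≤ ENNReal.ofReal (C ^ 2) *
            sobSq k φ {p : EuclideanSpace ℝ (Fin d) × ℝ |
              a < p.2 - η₁ p.1 ∧ p.2 - η₁ p.1 < b} := by
  obtain ⟨M, hM⟩ := hbd 1
  have hη : UniformContinuous η₁ :=
    uniformContinuous_of_norm_fderiv_le (hsm.differentiable (by simp)) (C := M) fun x => by
      simpa only [norm_iteratedFDeriv_one] using hM x
  obtain ⟨C, hC, hle⟩ := elliptic_regularity_strip_general hη h₁ h₃
  exact ⟨C, hC, fun φ hφ hΔ _ => hle k φ hφ hΔ⟩
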